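/- Let Γ be a finite n-player extensive-form game with imperfect information, chance, and perfect recall, and let η be any lower-bound function. Then there exists a distribution μ ∈ Δ_Π such that following recommendations is an NE of the perturbed extended game (Γ^ext(μ), η). (Such a μ is an EFCE of the corresponding perturbed game; consequently, the trembling LP for EFPCE is always unbounded.) -/

import Mathlib

open scoped BigOperators Classical
open Filter

noncomputable section

/-- A finite `n`-player extensive-form game with imperfect information, chance,
and perfect recall.  Nodes are identified with the list of actions on the path
from the root (so a node `h` is its own action sequence `σ(h)`). -/
structure EFG (n : ℕ) where
  /-- The (global) set of actions. -/
  Action : Type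
  [finA : Fintype Action]
  [deqA : DecidableEq Action]
  /-- Information sets (of all players). -/
  Infoset : Type
  [finI : Fintype Infoset]
  [deqI : DecidableEq Infoset]
  /-- The set of histories (nodes), each identified by its action sequence. -/
  H : Finset (List Action)
  root_mem : ([] : List Action) ∈ H
  prefix_closed : ∀ ⦃h : List Action⦄, h ∈ H → ∀ ⦃h' : List Action⦄, h' <+: h → h' ∈ H
  /-- Actions available at a node (empty iff the node is terminal). -/
  avail : List Action → Finset Action
  child_iff : ∀ h ∈ H, ∀ a : Action, ((h ++ [a]) ∈ H ↔ a ∈ avail h)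
  /-- The infoset controlling a nonterminal node; `none` means chance moves. -/
  ctrl : List Action → Option Infoset
  /-- The player owning an infoset. -/
  infPlayer : Infoset → Fin n
  /-- The actions available at an infoset. -/
  infActions : Infoset → Finset Action
  infActions_nonempty : ∀ I : Infoset, (infActions I).Nonempty
  ctrl_actions : ∀ h ∈ H, ∀ I : Infoset, ctrl h = some I → avail h = infActions I
  /-- Action sets of distinct infosets are disjoint. -/
  infActions_disjoint : ∀ I J : Infoset, I ≠ J → Disjoint (infActions I) (infActions J)
  /-- Probabilities of chance moves. -/
  chanceProb : List Action → Action → ℝ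
  chance_pos : ∀ h ∈ H, avail h ≠ ∅ → ctrl h = none → ∀ a ∈ avail h, 0 < chanceProb h a
  chance_sum : ∀ h ∈ H, avail h ≠ ∅ → ctrl h = none → ∑ a ∈ avail h, chanceProb h a = 1
  /-- Utilities of the players over terminal nodes. -/
  util : Fin n → List Action → ℝ
  /-- `ownSeq I` is `σ_i(I)`, the sequence of player `i`'s own actions leading to `I`. -/
  ownSeq : Infoset → List Action
  /-- Perfect recall: all nodes of an infoset are reached by the same sequence of
  the owning player's actions. -/
  perfect_recall : ∀ I : Infoset, ∀ h ∈ H, ctrl h = some I →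
    h.filter (fun a => decide (∃ J : Infoset, infPlayer J = infPlayer I ∧ a ∈ infActions J))
      = ownSeq I

attribute [instance] EFG.finA EFG.deqA EFG.finI EFG.deqI

namespace EFG

variable {n : ℕ}

/-- Pure strategies `Π_i` of player `i`: an action at each of her infosets. -/
abbrev PureStrat (G : EFG n) (i : Fin n) :=
  ∀ J : {J : G.Infoset // G.infPlayer J = i}, {a : G.Action // a ∈ G.infActions J.1}

/-- Pure strategy profiles `Π`. -/
abbrev Profile (G : EFG n) := ∀ i : Fin n, G.PureStrat i

/-- Terminal nodes `Z`. -/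
def terminalSet (G : EFG n) : Finset (List G.Action) := G.H.filter (fun h => G.avail h = ∅)

/-- `μ ∈ Δ_Π`. -/
def IsDistribution (G : EFG n) (μ : G.Profile → ℝ) : Prop :=
  (∀ π, 0 ≤ μ π) ∧ ∑ π : G.Profile, μ π = 1

/-- `h` is a node belonging to the infoset `I`. -/
def InfNode (G : EFG n) (I : G.Infoset) (h : List G.Action) : Prop :=
  h ∈ G.H ∧ G.ctrl h = some I

/-- `I ≺ J` : some node of `J` is a (strict) descendant of some node of `I`. -/
def infLt (G : EFG n) (I J : G.Infoset) : Prop :=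
  ∃ h k, G.InfNode I h ∧ G.InfNode J k ∧ h <+: k ∧ h ≠ k

/-- `I ⪯ J`. -/
def infLe (G : EFG n) (I J : G.Infoset) : Prop := I = J ∨ G.infLt I J

/-- Behavior strategy profiles: `β i a` is the probability with which player `i`
plays action `a` (at the unique infoset where `a` is available). -/
def IsBehavior (G : EFG n) (β : Fin n → G.Action → ℝ) : Prop :=
  (∀ i a, 0 ≤ β i a ∧ β i a ≤ 1) ∧
  ∀ I : G.Infoset, ∑ a ∈ G.infActions I, β (G.infPlayer I) a = 1

/-- Probability of traversing the path `rest` starting from node `pre`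
when players play the behavior profile `β` and chance plays its fixed probabilities. -/
def reachAux (G : EFG n) (β : Fin n → G.Action → ℝ) :
    List G.Action → List G.Action → ℝ
  | _, [] => 1
  | pre, a :: rest =>
    (match G.ctrl pre with
     | some I => β (G.infPlayer I) a
     | none => G.chanceProb pre a) * reachAux G β (pre ++ [a]) rest

/-- Probability of reaching node `z` under behavior profile `β`. -/
def reach (G : EFG n) (β : Fin n → G.Action → ℝ) (z : List G.Action) : ℝ :=
  G.reachAux β [] z

/-- Expected utility of player `i` under behavior profile `β`. -/
def EU (G : EFG n) (i : Fin n) (β : Fin n → G.Action → ℝ) : ℝ :=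
  ∑ z ∈ G.terminalSet, G.reach β z * G.util i z

/-- Nash equilibrium in behavior strategies. -/
def IsNE (G : EFG n) (β : Fin n → G.Action → ℝ) : Prop :=
  G.IsBehavior β ∧ ∀ (i : Fin n) (βi : G.Action → ℝ),
    G.IsBehavior (Function.update β i βi) →
    G.EU i (Function.update β i βi) ≤ G.EU i β

/-- A valid lower-bound (tremble) function `η`. -/
def IsLowerBound (G : EFG n) (η : G.Action → ℝ) : Prop :=
  (∀ a, 0 < η a ∧ η a < 1) ∧ ∀ I : G.Infoset, ∑ a ∈ G.infActions I, η a < 1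

/-- `β` respects the lower bounds `η` of a perturbed game. -/
def Respects (G : EFG n) (η : G.Action → ℝ) (β : Fin n → G.Action → ℝ) : Prop :=
  ∀ I : G.Infoset, ∀ a ∈ G.infActions I, η a ≤ β (G.infPlayer I) a

/-- Nash equilibrium of the perturbed game `(Γ, η)`. -/
def IsPertNE (G : EFG n) (η : G.Action → ℝ) (β : Fin n → G.Action → ℝ) : Prop :=
  G.IsBehavior β ∧ G.Respects η β ∧
  ∀ (i : Fin n) (βi : G.Action → ℝ),
    G.IsBehavior (Function.update β i βi) → G.Respects η (Function.update β i βi) →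
    G.EU i (Function.update β i βi) ≤ G.EU i β

/-- Perfect equilibrium (Selten): a limit point of NEs of perturbed games with
vanishing trembles. -/
def IsPE (G : EFG n) (β : Fin n → G.Action → ℝ) : Prop :=
  ∃ η : ℕ → G.Action → ℝ, (∀ t, G.IsLowerBound (η t)) ∧
    (∀ a, Tendsto (fun t => η t a) atTop (nhds 0)) ∧
    ∃ βs : ℕ → (Fin n → G.Action → ℝ), (∀ t, G.IsPertNE (η t) (βs t)) ∧
      MapClusterPt β atTop βs

/-! ### The extended game `Γ^ext(μ)` -/

/-- The information available at infoset `I` of the extended game (besides `I`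
itself): the recommendations received at all own infosets `J ⪯ I`. -/
abbrev RecInfo (G : EFG n) (I : G.Infoset) :=
  ∀ J : {J : G.Infoset // G.infPlayer J = G.infPlayer I ∧ G.infLe J I},
    {a : G.Action // a ∈ G.infActions J.1}

/-- A behavior strategy of player `i` in the extended game: a distribution over
actions at each infoset of the extended game. -/
abbrev ExtBehavior (G : EFG n) (i : Fin n) :=
  ∀ I : {I : G.Infoset // G.infPlayer I = i}, G.RecInfo I.1 → G.Action → ℝ

/-- The recommendation information at `I` induced by the recommended profile `π`. -/
def recOf (G : EFG n) (π : G.Profile) (I : G.Infoset) : G.RecInfo I :=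
  fun J => π (G.infPlayer I) ⟨J.1, J.2.1⟩

/-- Validity of a behavior strategy profile of the extended game. -/
def IsExtBehavior (G : EFG n) (δ : ∀ i, G.ExtBehavior i) : Prop :=
  ∀ (i : Fin n) (I : {I : G.Infoset // G.infPlayer I = i}) (r : G.RecInfo I.1),
    (∀ a, 0 ≤ δ i I r a) ∧ (∑ a ∈ G.infActions I.1, δ i I r a = 1) ∧
    (∀ a, a ∉ G.infActions I.1 → δ i I r a = 0)

/-- Probability of traversing `rest` from `pre` in the extended game when the
profile `π` has been recommended and players play `δ`. -/
def extReachAux (G : EFG n) (δ : ∀ i, G.ExtBehavior i) (π : G.Profile) :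
    List G.Action → List G.Action → ℝ
  | _, [] => 1
  | pre, a :: rest =>
    (match G.ctrl pre with
     | some I => δ (G.infPlayer I) ⟨I, rfl⟩ (G.recOf π I) a
     | none => G.chanceProb pre a) * extReachAux G δ π (pre ++ [a]) rest

/-- Expected utility of player `i` in the extended game `Γ^ext(μ)` under the
behavior strategy profile `δ`. -/
def extEU (G : EFG n) (μ : G.Profile → ℝ) (i : Fin n) (δ : ∀ i, G.ExtBehavior i) : ℝ :=
  ∑ π : G.Profile, μ π * ∑ z ∈ G.terminalSet, G.extReachAux δ π [] z * G.util i z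

/-- `δ` is a Nash equilibrium of the extended game `Γ^ext(μ)`. -/
def ExtIsNE (G : EFG n) (μ : G.Profile → ℝ) (δ : ∀ i, G.ExtBehavior i) : Prop :=
  G.IsExtBehavior δ ∧ ∀ (i : Fin n) (δi : G.ExtBehavior i),
    G.IsExtBehavior (Function.update δ i δi) →
    G.extEU μ i (Function.update δ i δi) ≤ G.extEU μ i δ

/-- The "follow recommendations" strategy profile of the extended game. -/
def followRec (G : EFG n) : ∀ i, G.ExtBehavior i :=
  fun _ I r a => if a = (r ⟨I.1, rfl, Or.inl rfl⟩).1 then 1 else 0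

/-- `η̃(a)`: the maximum probability assignable to `a` at infoset `I` given `η`. -/
def resProb (G : EFG n) (η : G.Action → ℝ) (I : G.Infoset) (a : G.Action) : ℝ :=
  1 - ∑ a' ∈ (G.infActions I).erase a, η a'

/-- Following recommendations in the perturbed extended game `(Γ^ext(μ), η)`:
the recommended action gets all the residual probability, every other action
its lower bound. -/
def followRecPert (G : EFG n) (η : G.Action → ℝ) : ∀ i, G.ExtBehavior i :=
  fun _ I r a =>
    if a ∈ G.infActions I.1 then
      (if a = (r ⟨I.1, rfl, Or.inl rfl⟩).1 then G.resProb η I.1 a else η a)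
    else 0

/-- `δ` respects the lower bounds `η` in the extended game. -/
def ExtRespects (G : EFG n) (η : G.Action → ℝ) (δ : ∀ i, G.ExtBehavior i) : Prop :=
  ∀ (i : Fin n) (I : {I : G.Infoset // G.infPlayer I = i}) (r : G.RecInfo I.1),
    ∀ a ∈ G.infActions I.1, η a ≤ δ i I r a

/-- `δ` is a Nash equilibrium of the perturbed extended game `(Γ^ext(μ), η)`. -/
def ExtIsPertNE (G : EFG n) (μ : G.Profile → ℝ) (η : G.Action → ℝ)
    (δ : ∀ i, G.ExtBehavior i) : Prop :=
  G.IsExtBehavior δ ∧ G.ExtRespects η δ ∧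
  ∀ (i : Fin n) (δi : G.ExtBehavior i),
    G.IsExtBehavior (Function.update δ i δi) → G.ExtRespects η (Function.update δ i δi) →
    G.extEU μ i (Function.update δ i δi) ≤ G.extEU μ i δ

/-- Following recommendations is a perfect equilibrium of `Γ^ext(μ)`. -/
def FollowIsPE (G : EFG n) (μ : G.Profile → ℝ) : Prop :=
  ∃ η : ℕ → G.Action → ℝ, (∀ t, G.IsLowerBound (η t)) ∧
    (∀ a, Tendsto (fun t => η t a) atTop (nhds 0)) ∧
    ∃ δs : ℕ → ∀ i, G.ExtBehavior i, (∀ t, G.ExtIsPertNE μ (η t) (δs t)) ∧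
      MapClusterPt G.followRec atTop δs

/-- Extensive-form correlated equilibrium: following recommendations is an NE of
`Γ^ext(μ)`. -/
def IsEFCE (G : EFG n) (μ : G.Profile → ℝ) : Prop :=
  G.IsDistribution μ ∧ G.ExtIsNE μ G.followRec

/-- Extensive-form perfect correlated equilibrium: following recommendations is
a PE of `Γ^ext(μ)`. -/
def IsEFPCE (G : EFG n) (μ : G.Profile → ℝ) : Prop :=
  G.IsDistribution μ ∧ G.FollowIsPE μ

/-- The product distribution on `Π` induced by a behavior profile `β`:
`μ(π) = ∏_i ∏_{I ∈ 𝓘_i} β_i(π_i(I))`. -/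
def prodDist (G : EFG n) (β : Fin n → G.Action → ℝ) : G.Profile → ℝ :=
  fun π => ∏ i : Fin n, ∏ J : {J : G.Infoset // G.infPlayer J = i}, β i (π i J).1

/-! ### Trigger agents, `ξ^η`, and related sets -/

/-- `Z(I)`: terminal nodes reachable from infoset `I`. -/
def ZI (G : EFG n) (I : G.Infoset) : Finset (List G.Action) :=
  G.terminalSet.filter (fun z => ∃ h, G.InfNode I h ∧ h <+: z)

/-- `Z(I,a)`: terminal nodes reachable by playing `a` at `I`. -/
def ZIa (G : EFG n) (I : G.Infoset) (a : G.Action) : Finset (List G.Action) :=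
  G.terminalSet.filter (fun z => ∃ h, G.InfNode I h ∧ (h ++ [a]) <+: z)

/-- `K ∈ 𝓒(I,a)`: `K` immediately follows `I` when playing `a` (no other infoset
of the same player in between). -/
def ImmSucc (G : EFG n) (I : G.Infoset) (a : G.Action) (K : G.Infoset) : Prop :=
  G.infPlayer K = G.infPlayer I ∧
  ∃ h k, G.InfNode I h ∧ G.InfNode K k ∧ (h ++ [a]) <+: k ∧
    ∀ h' : List G.Action, (h ++ [a]) <+: h' → h' <+: k → h' ≠ k →
      ∀ J : G.Infoset, G.infPlayer J = G.infPlayer I → ¬ G.InfNode J h'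

/-- `Z⊥(I,a)`: terminal nodes reachable by playing `a` at `I` without traversing
any further infoset of the same player. -/
def Zbot (G : EFG n) (I : G.Infoset) (a : G.Action) : Finset (List G.Action) :=
  (G.ZIa I a).filter (fun z => ¬ ∃ K, G.ImmSucc I a K ∧ z ∈ G.ZI K)

/-- `π_i ∈ Π_i(a)`: the pure strategy `πi` prescribes action `a`. -/
def Prescribes (G : EFG n) {i : Fin n} (πi : G.PureStrat i) (a : G.Action) : Prop :=
  ∃ J, (πi J).1 = a

/-- `π_i ∈ Π_i(z)`: `πi` plays so as to reach the node `z`. -/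
def PlaysToNode (G : EFG n) {i : Fin n} (πi : G.PureStrat i) (z : List G.Action) : Prop :=
  ∀ (k : List G.Action) (a : G.Action) (J : G.Infoset) (hJ : G.infPlayer J = i),
    G.ctrl k = some J → (k ++ [a]) <+: z → (πi ⟨J, hJ⟩).1 = a

/-- `π_i ∈ Π_i(I)`: `πi` plays so as to reach the infoset `I` whenever possible. -/
def PlaysToInf (G : EFG n) {i : Fin n} (πi : G.PureStrat i) (I : G.Infoset) : Prop :=
  ∀ h, G.InfNode I h → G.PlaysToNode πi h

/-- A distribution `μ̂_i ∈ Δ_{Π_i(I)}`. -/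
def IsDistOn (G : EFG n) {i : Fin n} (μhat : G.PureStrat i → ℝ) (I : G.Infoset) : Prop :=
  (∀ πi, 0 ≤ μhat πi) ∧ (∑ πi : G.PureStrat i, μhat πi = 1) ∧
  ∀ πi, ¬ G.PlaysToInf πi I → μhat πi = 0

/-- `p_c(z)`: product of chance probabilities on the path to `z`. -/
def pcAux (G : EFG n) : List G.Action → List G.Action → ℝ
  | _, [] => 1
  | pre, a :: rest =>
    (match G.ctrl pre with
     | some _ => 1
     | none => G.chanceProb pre a) * pcAux G (pre ++ [a]) rest

def pc (G : EFG n) (z : List G.Action) : ℝ := G.pcAux [] z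

/-- Auxiliary for `ξ^η(z, π)`. -/
def xiFullAux (G : EFG n) (η : G.Action → ℝ) (π : G.Profile) :
    List G.Action → List G.Action → ℝ
  | _, [] => 1
  | pre, a :: rest =>
    (match G.ctrl pre with
     | some J =>
       if ((π (G.infPlayer J)) ⟨J, rfl⟩).1 = a then G.resProb η J a else η a
     | none => G.chanceProb pre a) * xiFullAux G η π (pre ++ [a]) rest

/-- `ξ^η(z, π)`: probability of reaching `z` when `π` is recommended and all
players obey, with trembles `η`. -/
def xiFull (G : EFG n) (η : G.Action → ℝ) (π : G.Profile) (z : List G.Action) : ℝ :=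
  G.xiFullAux η π [] z

/-- Auxiliary for `ξ^η(z, I, π)`. -/
def xiFromAux (G : EFG n) (η : G.Action → ℝ) (i : Fin n) (I : G.Infoset) (π : G.Profile) :
    List G.Action → List G.Action → ℝ
  | _, [] => 1
  | pre, a :: rest =>
    (match G.ctrl pre with
     | some J =>
       if G.infPlayer J = i ∧ (∃ h, G.InfNode I h ∧ h <+: pre) then 1
       else if ((π (G.infPlayer J)) ⟨J, rfl⟩).1 = a then G.resProb η J a else η a
     | none => G.chanceProb pre a) * xiFromAux G η i I π (pre ++ [a]) rest

/-- `ξ^η(z, I, π)`: as `ξ^η(z, π)`, excluding player `i`'s actions leading from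
`I` to `z`. -/
def xiFrom (G : EFG n) (η : G.Action → ℝ) (i : Fin n) (I : G.Infoset) (π : G.Profile)
    (z : List G.Action) : ℝ :=
  G.xiFromAux η i I π [] z

/-- Auxiliary for `ξ^η(z, π̂_i)` (only player `i`'s actions from `I` to `z`). -/
def xiOwnAux (G : EFG n) (η : G.Action → ℝ) (i : Fin n) (I : G.Infoset)
    (πi : G.PureStrat i) : List G.Action → List G.Action → ℝ
  | _, [] => 1
  | pre, a :: rest =>
    (match G.ctrl pre with
     | some J =>
       if hJ : G.infPlayer J = i ∧ (∃ h, G.InfNode I h ∧ h <+: pre) then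
         (if (πi ⟨J, hJ.1⟩).1 = a then G.resProb η J a else η a)
       else 1
     | none => 1) * xiOwnAux G η i I πi (pre ++ [a]) rest

/-- `ξ^η(z, π̂_i)` for `π̂_i ∈ Π_i(I)`: product over player `i`'s actions from
`I` to `z`. -/
def xiOwn (G : EFG n) (η : G.Action → ℝ) (i : Fin n) (I : G.Infoset)
    (πi : G.PureStrat i) (z : List G.Action) : ℝ :=
  G.xiOwnAux η i I πi [] z

/-- `p^{η,I,a}_{μ,μ̂_i}(z)`: probability of reaching `z ∈ Z(I)` when the
`(I,a,μ̂_i)`-trigger agent gets triggered, in the perturbed extended game. -/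
def pTrig (G : EFG n) (η : G.Action → ℝ) (μ : G.Profile → ℝ) (i : Fin n)
    (I : G.Infoset) (a : G.Action) (μhat : G.PureStrat i → ℝ) (z : List G.Action) : ℝ :=
  (∑ π : G.Profile, if G.Prescribes (π i) a then G.xiFrom η i I π z * μ π else 0) *
  (∑ πi : G.PureStrat i, if G.PlaysToInf πi I then G.xiOwn η i I πi z * μhat πi else 0)

end EFG


section CorrelatedEquilibrium

/-- A theorem of the alternative: if no nonnegative combination of the columns of `A` is negative
in every row, then some convex combination of the rows is nonnegative. -/
lemma exists_convex_combination_nonneg {P K : Type*} [Fintype P] [Fintype K] (A : P → K → ℝ)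
    (h : ∀ y : K → ℝ, (∀ k, 0 ≤ y k) → ∃ p, 0 ≤ ∑ k, A p k * y k) :
    ∃ x : P → ℝ, (∀ p, 0 ≤ x p) ∧ ∑ p, x p = 1 ∧ ∀ k, 0 ≤ ∑ p, x p * A p k := by
  by_contra hne
  let L : (P → ℝ) →ₗ[ℝ] (K → ℝ) :=
    { toFun := fun x k => ∑ p, x p * A p k
      map_add' := fun x y => by
        ext k; simp [add_mul, Finset.sum_add_distrib]
      map_smul' := fun c x => by
        ext k; simp [mul_assoc, Finset.mul_sum] }
  have hdisj : Disjoint (L '' stdSimplex ℝ P) (Set.Ici (0 : K → ℝ)) := by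
    rw [Set.disjoint_left]
    rintro _ ⟨x, hx, rfl⟩ hnn
    exact hne ⟨x, hx.1, hx.2, fun k => hnn k⟩
  obtain ⟨f, u, v, hu, huv, hv⟩ := geometric_hahn_banach_compact_closed
    ((convex_stdSimplex ℝ P).linear_image L)
    ((isCompact_stdSimplex ℝ P).image L.continuous_of_finiteDimensional)
    (convex_Ici (0 : K → ℝ)) isClosed_Ici hdisj
  have hv0 : v < 0 := by simpa using hv 0 (by simp)
  have hy : ∀ k, 0 ≤ f (Pi.single k 1) := by
    intro k
    by_contra hk
    push Not at hk
    have h1 := hv ((v / f (Pi.single k 1)) • Pi.single k 1) (by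
      rw [Set.mem_Ici]
      exact smul_nonneg (div_nonneg_of_nonpos hv0.le hk.le) (by simp))
    rw [map_smul, smul_eq_mul, div_mul_cancel₀ _ hk.ne] at h1
    exact lt_irrefl _ h1
  obtain ⟨p, hp⟩ := h _ hy
  have hrow : f (A p) < u := hu _ ⟨Pi.single p 1, single_mem_stdSimplex ℝ p, by
    ext k
    simp [L, Pi.single_apply]⟩
  have hf : f (A p) = ∑ k, A p k * f (Pi.single k 1) := by
    conv_lhs => rw [pi_eq_sum_univ' (A p)]
    simp [map_sum, Pi.single]
  linarith

/-- Every finite system of nonnegative transition rates has a stationary distribution. -/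
lemma exists_stationary {S : Type*} [Fintype S] [Nonempty S] (q : S → S → ℝ)
    (hq : ∀ s t, 0 ≤ q s t) :
    ∃ x : S → ℝ, (∀ s, 0 ≤ x s) ∧ ∑ s, x s = 1 ∧
      ∀ t, ∑ s, x s * q s t = x t * ∑ s, q t s := by
  obtain ⟨x, hx0, hx1, hx⟩ := exists_convex_combination_nonneg
    (fun s t => q s t - if s = t then ∑ r, q s r else 0) (by
      intro y _
      obtain ⟨s, hs⟩ := Finite.exists_min y
      refine ⟨s, ?_⟩
      have : ∑ t, (q s t - if s = t then ∑ r, q s r else 0) * y t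
          = ∑ t, q s t * (y t - y s) := by
        simp [sub_mul, mul_sub, Finset.sum_sub_distrib, Finset.sum_mul]
      rw [this]
      exact Finset.sum_nonneg fun t _ => mul_nonneg (hq s t) (sub_nonneg.2 (hs t)))
  refine ⟨x, hx0, hx1, ?_⟩
  have key : ∀ t, ∑ s, x s * (q s t - if s = t then ∑ r, q s r else 0)
      = ∑ s, x s * q s t - x t * ∑ s, q t s := by
    intro t
    simp [mul_sub, Finset.sum_sub_distrib]
  simp only [key] at hx
  have htot : ∑ t, (∑ s, x s * q s t - x t * ∑ s, q t s) = 0 := by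
    rw [Finset.sum_sub_distrib, Finset.sum_comm]
    simp [Finset.mul_sum]
  intro t
  have := (Finset.sum_eq_zero_iff_of_nonneg fun t _ => hx t).1 htot t (Finset.mem_univ t)
  linarith

variable {ι : Type*} [Fintype ι] [DecidableEq ι] {S : ι → Type*} [∀ i, Fintype (S i)]

/-- Under a product of distributions, deviating at rates `q` for which the `i`-th factor is
stationary does not change the expectation. -/
lemma sum_prod_mul_update_of_stationary (x : ∀ i, S i → ℝ) (i : ι) (q : S i → S i → ℝ)
    (hx : ∀ t, ∑ s, x i s * q s t = x i t * ∑ s, q t s) (u : (∀ j, S j) → ℝ) :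
    ∑ π : ∀ j, S j, ∑ t, (∏ j, x j (π j)) * q (π i) t * u (Function.update π i t)
      = ∑ π : ∀ j, S j, ∑ t, (∏ j, x j (π j)) * q (π i) t * u π := by
  have hprod : ∀ (π : ∀ j, S j) (t : S i), ∏ j, x j (Function.update π i t j)
      = x i t * ∏ j ∈ Finset.univ.erase i, x j (π j) := by
    intro π t
    rw [← Finset.mul_prod_erase _ _ (Finset.mem_univ i), Function.update_self]
    congr 1
    refine Finset.prod_congr rfl fun j hj => ?_
    rw [Function.update_of_ne (Finset.ne_of_mem_erase hj)]
  have hswap : ∑ π : ∀ j, S j, ∑ t, (∏ j, x j (π j)) * q (π i) t * u (Function.update π i t)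
      = ∑ π : ∀ j, S j, ∑ t, (∏ j, x j (Function.update π i t j)) * q t (π i) * u π := by
    rw [← Fintype.sum_prod_type', ← Fintype.sum_prod_type']
    refine Finset.sum_nbij' (fun p => (Function.update p.1 i p.2, p.1 i))
      (fun p => (Function.update p.1 i p.2, p.1 i)) ?_ ?_ ?_ ?_ ?_ <;> simp
  rw [hswap]
  refine Finset.sum_congr rfl fun π _ => ?_
  rw [← Finset.mul_prod_erase _ (fun j => x j (π j)) (Finset.mem_univ i)]
  simp only [hprod]
  calc ∑ t, x i t * (∏ j ∈ Finset.univ.erase i, x j (π j)) * q t (π i) * u π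
      = (∑ t, x i t * q t (π i)) * ((∏ j ∈ Finset.univ.erase i, x j (π j)) * u π) := by
        rw [Finset.sum_mul]
        exact Finset.sum_congr rfl fun t _ => by ring
    _ = ∑ t, x i (π i) * (∏ j ∈ Finset.univ.erase i, x j (π j)) * q (π i) t * u π := by
        rw [hx, Finset.mul_sum, Finset.sum_mul]
        exact Finset.sum_congr rfl fun t _ => by ring

/-- Existence of correlated equilibria of finite games: no player gains by replacing her recommended
strategy `s` by `t` at rate `w s t`. -/
lemma exists_correlated_equilibrium [∀ i, Nonempty (S i)] (u : ι → (∀ i, S i) → ℝ) :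
    ∃ μ : (∀ i, S i) → ℝ, (∀ π, 0 ≤ μ π) ∧ ∑ π, μ π = 1 ∧
      ∀ (i : ι) (w : S i → S i → ℝ), (∀ s t, 0 ≤ w s t) →
        0 ≤ ∑ π, μ π * ∑ t, w (π i) t * (u i π - u i (Function.update π i t)) := by
  obtain ⟨μ, hμ0, hμ1, hμ⟩ := exists_convex_combination_nonneg
    (fun (π : ∀ i, S i) (k : Σ i, S i × S i) =>
      if π k.1 = k.2.1 then u k.1 π - u k.1 (Function.update π k.1 k.2.2) else 0) (by
    intro y hy
    choose x hx0 hx1 hx using fun i => exists_stationary (fun s t => y ⟨i, s, t⟩)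
      (fun s t => hy ⟨i, s, t⟩)
    have hrow : ∀ π : ∀ i, S i, ∑ k : Σ i, S i × S i,
        (if π k.1 = k.2.1 then u k.1 π - u k.1 (Function.update π k.1 k.2.2) else 0) * y k
        = ∑ i, ∑ t, y ⟨i, π i, t⟩ * (u i π - u i (Function.update π i t)) := by
      intro π
      rw [Fintype.sum_sigma]
      refine Finset.sum_congr rfl fun i _ => ?_
      rw [Fintype.sum_prod_type, Finset.sum_comm]
      refine Finset.sum_congr rfl fun t _ => ?_
      simp [mul_comm]
    simp only [hrow]
    by_contra hneg
    push Not at hneg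
    have hmass : ∑ π : ∀ i, S i, ∏ i, x i (π i) = 1 := by
      rw [← Fintype.prod_sum]
      simp [hx1]
    have hzero : ∑ π : ∀ i, S i, (∏ i, x i (π i)) *
        ∑ i, ∑ t, y ⟨i, π i, t⟩ * (u i π - u i (Function.update π i t)) = 0 := by
      simp only [Finset.mul_sum]
      rw [Finset.sum_comm]
      refine Finset.sum_eq_zero fun i _ => ?_
      have := sum_prod_mul_update_of_stationary x i (fun s t => y ⟨i, s, t⟩) (hx i) (u i)
      rw [← sub_eq_zero, ← Finset.sum_sub_distrib] at this
      rw [← neg_eq_zero, ← this, ← Finset.sum_neg_distrib]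
      refine Finset.sum_congr rfl fun π _ => ?_
      rw [← Finset.sum_sub_distrib, ← Finset.sum_neg_distrib]
      exact Finset.sum_congr rfl fun t _ => by ring
    have hx' : ∀ π : ∀ i, S i, 0 ≤ ∏ i, x i (π i) := fun π =>
      Finset.prod_nonneg fun i _ => hx0 i _
    have hall := (Finset.sum_eq_zero_iff_of_nonpos fun π _ =>
      mul_nonpos_of_nonneg_of_nonpos (hx' π) (hneg π).le).1 hzero
    have : ∑ π : ∀ i, S i, ∏ i, x i (π i) = 0 := Finset.sum_eq_zero fun π hπ =>
      (mul_eq_zero.1 (hall π hπ)).resolve_right (hneg π).ne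
    linarith)
  refine ⟨μ, hμ0, hμ1, fun i w hw => ?_⟩
  have hsum : ∑ π, μ π * ∑ t, w (π i) t * (u i π - u i (Function.update π i t))
      = ∑ s, ∑ t, w s t * ∑ π, μ π *
          (if π i = s then u i π - u i (Function.update π i t) else 0) := by
    simp only [Finset.mul_sum]
    rw [Finset.sum_comm]
    symm
    rw [Finset.sum_comm]
    refine Finset.sum_congr rfl fun t _ => ?_
    rw [Finset.sum_comm]
    refine Finset.sum_congr rfl fun π _ => ?_
    simp only [mul_ite, mul_zero, Finset.sum_ite_eq, Finset.mem_univ, if_true]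
    ring
  rw [hsum]
  exact Finset.sum_nonneg fun s _ => Finset.sum_nonneg fun t _ =>
    mul_nonneg (hw s t) (hμ ⟨i, s, t⟩)

end CorrelatedEquilibrium

namespace EFG

variable {n : ℕ} (G : EFG n)

/-- No path visits an infoset twice. -/
lemma InfNode.eq_of_prefix {G : EFG n} {I : G.Infoset} {h k : List G.Action}
    (hh : G.InfNode I h) (hk : G.InfNode I k) (hle : h <+: k) : h = k := by
  obtain ⟨t, rfl⟩ := hle
  cases t with
  | nil => simp
  | cons a t =>
    exfalso
    have hchild : h ++ [a] ∈ G.H := G.prefix_closed hk.1 ⟨t, by simp⟩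
    have ha : a ∈ G.infActions I := by
      rw [← G.ctrl_actions h hh.1 I hh.2]
      exact (G.child_iff h hh.1 a).1 hchild
    have heq := (G.perfect_recall I _ hk.1 hk.2).trans (G.perfect_recall I h hh.1 hh.2).symm
    have hpos : decide (∃ J, G.infPlayer J = G.infPlayer I ∧ a ∈ G.infActions J) = true :=
      decide_eq_true ⟨I, rfl, ha⟩
    rw [List.filter_append, List.filter_cons, if_pos hpos] at heq
    simpa using congrArg List.length heq

lemma resProb_eq (η : G.Action → ℝ) {I : G.Infoset} {a : G.Action} (ha : a ∈ G.infActions I) :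
    G.resProb η I a = η a + (1 - ∑ b ∈ G.infActions I, η b) := by
  rw [resProb, ← Finset.add_sum_erase _ _ ha]
  ring

lemma followRecPert_of_mem (η : G.Action → ℝ) {i : Fin n}
    (I : {I : G.Infoset // G.infPlayer I = i}) (r : G.RecInfo I.1) {a : G.Action}
    (ha : a ∈ G.infActions I.1) :
    G.followRecPert η i I r a = η a +
      if a = (r ⟨I.1, rfl, Or.inl rfl⟩).1 then 1 - ∑ b ∈ G.infActions I.1, η b else 0 := by
  unfold followRecPert
  rw [if_pos ha]
  split_ifs
  · exact G.resProb_eq η ha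
  · simp

lemma extRespects_followRecPert {η : G.Action → ℝ} (hη : G.IsLowerBound η) :
    G.ExtRespects η (G.followRecPert η) := by
  intro i I r a ha
  rw [G.followRecPert_of_mem η I r ha]
  have := hη.2 I.1
  split_ifs <;> linarith

lemma isExtBehavior_followRecPert {η : G.Action → ℝ} (hη : G.IsLowerBound η) :
    G.IsExtBehavior (G.followRecPert η) := by
  intro i I r
  have hout : ∀ a, a ∉ G.infActions I.1 → G.followRecPert η i I r a = 0 :=
    fun a ha => if_neg ha
  refine ⟨fun a => ?_, ?_, hout⟩
  · by_cases ha : a ∈ G.infActions I.1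
    · exact (hη.1 a).1.le.trans (G.extRespects_followRecPert hη i I r a ha)
    · exact (hout a ha).ge
  · rw [Finset.sum_congr rfl fun a ha => G.followRecPert_of_mem η I r ha,
      Finset.sum_add_distrib, Finset.sum_ite_eq', if_pos (Subtype.prop _)]
    ring

lemma prod_eq_mul_prod_of_eq_one {ι : Type*} [Fintype ι] (k : ι) {f f' : ι → ℝ}
    (hk : f k = 1) (hf : ∀ j, j ≠ k → f' j = f j) : ∏ j, f' j = f' k * ∏ j, f j := by
  rw [← Finset.mul_prod_erase _ f' (Finset.mem_univ k),
    ← Finset.mul_prod_erase _ f (Finset.mem_univ k), hk, one_mul]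
  congr 1
  exact Finset.prod_congr rfl fun j hj => hf j (Finset.ne_of_mem_erase hj)

/-- Since a path visits every infoset at most once, the probability of following it factors over the
infosets of player `i`, both as a function of her recommended strategy when all players follow
recommendations, and when she instead plays `δi`, which at every infoset agrees with a
recommendation redrawn from `w`. -/
lemma exists_extReachAux_factorization (η : G.Action → ℝ) (i : Fin n) (δi : G.ExtBehavior i)
    (π : G.Profile)
    (w : ∀ J : {J : G.Infoset // G.infPlayer J = i}, {a : G.Action // a ∈ G.infActions J.1} → ℝ)
    (hw1 : ∀ J, ∑ b, w J b = 1)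
    (hw : ∀ J, ∀ a ∈ G.infActions J.1,
      ∑ b, w J b * (η a + if a = b.1 then 1 - ∑ b ∈ G.infActions J.1, η b else 0)
        = δi J (G.recOf π J.1) a) :
    ∀ rest pre : List G.Action, pre ++ rest ∈ G.H →
      ∃ (c : ℝ) (g : ∀ J : {J : G.Infoset // G.infPlayer J = i},
          {a : G.Action // a ∈ G.infActions J.1} → ℝ),
        (∀ τ : G.PureStrat i,
          G.extReachAux (G.followRecPert η) (Function.update π i τ) pre rest
            = c * ∏ J, g J (τ J)) ∧
        G.extReachAux (Function.update (G.followRecPert η) i δi) π pre rest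
          = c * ∏ J, ∑ b, w J b * g J b ∧
        ∀ J, (∀ h, pre <+: h → h <+: pre ++ rest → G.ctrl h ≠ some J.1) → ∀ b, g J b = 1 := by
  intro rest
  induction rest with
  | nil =>
    intro pre _
    exact ⟨1, fun _ _ => 1, by simp [extReachAux],
      by simp only [extReachAux, mul_one, hw1, Finset.prod_const_one], by simp⟩
  | cons a rest ih =>
    intro pre hmem
    have hmem' : (pre ++ [a]) ++ rest ∈ G.H := by simpa using hmem
    obtain ⟨c, g, hτ, hδ, hone⟩ := ih (pre ++ [a]) hmem'
    have hone' : ∀ J, (∀ h, pre <+: h → h <+: pre ++ a :: rest → G.ctrl h ≠ some J.1) →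
        ∀ b, g J b = 1 := fun J hJ => hone J fun h h1 h2 =>
      hJ h ((List.prefix_append pre [a]).trans h1) (by simpa using h2)
    have hpre : pre ∈ G.H := G.prefix_closed hmem (List.prefix_append _ _)
    have hchild : pre ++ [a] ∈ G.H := G.prefix_closed hmem' (List.prefix_append _ _)
    have hav : a ∈ G.avail pre := (G.child_iff pre hpre a).1 hchild
    rcases hctrl : G.ctrl pre with _ | I
    · refine ⟨G.chanceProb pre a * c, g, fun τ => ?_, ?_, hone'⟩
      · simp only [extReachAux, hctrl, hτ, mul_assoc]
      · simp only [extReachAux, hctrl, hδ, mul_assoc]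
    have haI : a ∈ G.infActions I := G.ctrl_actions pre hpre I hctrl ▸ hav
    by_cases hI : G.infPlayer I = i
    · subst hI
      have hgI : ∀ b, g ⟨I, rfl⟩ b = 1 := by
        refine hone ⟨I, rfl⟩ fun h h1 h2 hh => ?_
        have := InfNode.eq_of_prefix (I := I) ⟨hpre, hctrl⟩ ⟨G.prefix_closed hmem' h2, hh⟩
          ((List.prefix_append pre [a]).trans h1)
        subst this
        simpa using h1.length_le
      refine ⟨c, Function.update g ⟨I, rfl⟩ (fun b => η a +
        if a = b.1 then 1 - ∑ b ∈ G.infActions I, η b else 0), fun τ => ?_, ?_, fun J hJ => ?_⟩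
      · rw [prod_eq_mul_prod_of_eq_one ⟨I, rfl⟩ (f := fun J => g J (τ J)) (hgI _)
          (fun J hJ => by rw [Function.update_of_ne hJ])]
        simp only [extReachAux, hctrl, hτ]
        rw [G.followRecPert_of_mem η ⟨I, rfl⟩ _ haI, Function.update_self]
        simp only [recOf, Function.update_self]
        ring
      · rw [prod_eq_mul_prod_of_eq_one ⟨I, rfl⟩ (f := fun J => ∑ b, w J b * g J b)
          (by simp only [hgI, mul_one]; exact hw1 ⟨I, rfl⟩) (fun J hJ => by rw [Function.update_of_ne hJ])]
        simp only [extReachAux, hctrl, hδ, Function.update_self]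
        rw [hw ⟨I, rfl⟩ a haI]
        ring
      · have hne : J ≠ ⟨I, rfl⟩ := by
          rintro rfl
          exact hJ pre (List.prefix_refl _) (List.prefix_append _ _) hctrl
        rw [Function.update_of_ne hne]
        exact hone' J hJ
    · refine ⟨G.followRecPert η (G.infPlayer I) ⟨I, rfl⟩ (G.recOf π I) a * c, g,
        fun τ => ?_, ?_, hone'⟩
      · have hrec : G.recOf (Function.update π i τ) I = G.recOf π I := by
          funext J
          simp only [recOf, Function.update_of_ne hI]
        simp only [extReachAux, hctrl, hτ, hrec, mul_assoc]
      · simp only [extReachAux, hctrl, hδ, Function.update_of_ne hI, mul_assoc]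

/-- The recommendations observed at `J` by player `i` when she is recommended `s`. -/
def ownRec {i : Fin n} (s : G.PureStrat i) (J : {J : G.Infoset // G.infPlayer J = i}) :
    G.RecInfo J.1 :=
  fun K => s ⟨K.1, K.2.1.trans J.2⟩

lemma recOf_eq_ownRec {i : Fin n} (π : G.Profile) (J : {J : G.Infoset // G.infPlayer J = i}) :
    G.recOf π J.1 = G.ownRec (π i) J := by
  rcases J with ⟨J, rfl⟩
  rfl

/-- The probability with which a player recommended `s` and playing `δi` chooses `b` at `J` beyond
its lower bound, normalized. -/
def residualWeight (η : G.Action → ℝ) {i : Fin n} (δi : G.ExtBehavior i) (s : G.PureStrat i)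
    (J : {J : G.Infoset // G.infPlayer J = i}) (b : {a : G.Action // a ∈ G.infActions J.1}) : ℝ :=
  (δi J (G.ownRec s J) b.1 - η b.1) / (1 - ∑ a ∈ G.infActions J.1, η a)

lemma residualWeight_nonneg {η : G.Action → ℝ} (hη : G.IsLowerBound η) {i : Fin n}
    {δi : G.ExtBehavior i} (hδ : ∀ J r, ∀ a ∈ G.infActions J.1, η a ≤ δi J r a)
    (s : G.PureStrat i) (J : {J : G.Infoset // G.infPlayer J = i})
    (b : {a : G.Action // a ∈ G.infActions J.1}) : 0 ≤ G.residualWeight η δi s J b :=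
  div_nonneg (sub_nonneg.2 (hδ J _ b.1 b.2)) (sub_nonneg.2 (hη.2 J.1).le)

lemma sum_residualWeight {η : G.Action → ℝ} (hη : G.IsLowerBound η) {i : Fin n}
    {δi : G.ExtBehavior i} (hδ : ∀ J r, ∑ a ∈ G.infActions J.1, δi J r a = 1)
    (s : G.PureStrat i) (J : {J : G.Infoset // G.infPlayer J = i}) :
    ∑ b, G.residualWeight η δi s J b = 1 := by
  have hpos : 0 < 1 - ∑ a ∈ G.infActions J.1, η a := sub_pos.2 (hη.2 J.1)
  unfold residualWeight
  rw [← Finset.sum_div, div_eq_one_iff_eq hpos.ne',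
    Finset.sum_coe_sort (G.infActions J.1) (fun a => δi J (G.ownRec s J) a - η a),
    Finset.sum_sub_distrib, hδ]

lemma sum_residualWeight_mul {η : G.Action → ℝ} (hη : G.IsLowerBound η) {i : Fin n}
    {δi : G.ExtBehavior i} (hδ : ∀ J r, ∑ a ∈ G.infActions J.1, δi J r a = 1)
    (s : G.PureStrat i) (J : {J : G.Infoset // G.infPlayer J = i}) {a : G.Action}
    (ha : a ∈ G.infActions J.1) :
    ∑ b, G.residualWeight η δi s J b *
        (η a + if a = b.1 then 1 - ∑ b ∈ G.infActions J.1, η b else 0)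
      = δi J (G.ownRec s J) a := by
  have hpos : 0 < 1 - ∑ a ∈ G.infActions J.1, η a := sub_pos.2 (hη.2 J.1)
  have hite : ∀ b : {a : G.Action // a ∈ G.infActions J.1}, a = b.1 ↔ (⟨a, ha⟩ : Subtype _) = b :=
    fun b => by rw [Subtype.ext_iff]
  simp only [mul_add, Finset.sum_add_distrib, ← Finset.sum_mul, G.sum_residualWeight hη hδ, hite,
    mul_ite, mul_zero, Finset.sum_ite_eq, Finset.mem_univ, if_true]
  rw [residualWeight, div_mul_cancel₀ _ hpos.ne']
  ring

/-- Player `i`'s expected utility when `π` is recommended and all players follow recommendations. -/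
def pertPayoff (η : G.Action → ℝ) (i : Fin n) (π : G.Profile) : ℝ :=
  ∑ z ∈ G.terminalSet, G.extReachAux (G.followRecPert η) π [] z * G.util i z

/-- Deviating to `δi` amounts to following a recommendation redrawn with the residual weights. -/
lemma sum_extReachAux_update {η : G.Action → ℝ} (hη : G.IsLowerBound η) {i : Fin n}
    {δi : G.ExtBehavior i} (hδ : ∀ J r, ∑ a ∈ G.infActions J.1, δi J r a = 1) (π : G.Profile) :
    ∑ z ∈ G.terminalSet,
        G.extReachAux (Function.update (G.followRecPert η) i δi) π [] z * G.util i z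
      = ∑ τ : G.PureStrat i, (∏ J, G.residualWeight η δi (π i) J (τ J)) *
          G.pertPayoff η i (Function.update π i τ) := by
  simp only [pertPayoff, Finset.mul_sum]
  rw [Finset.sum_comm]
  refine Finset.sum_congr rfl fun z hz => ?_
  obtain ⟨c, g, hτ, hdev, -⟩ := G.exists_extReachAux_factorization η i δi π
    (G.residualWeight η δi (π i)) (G.sum_residualWeight hη hδ (π i))
    (fun J a ha => by rw [G.recOf_eq_ownRec]; exact G.sum_residualWeight_mul hη hδ (π i) J ha)
    z [] (by simpa using (Finset.mem_filter.1 hz).1)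
  rw [hdev, Fintype.prod_sum, Finset.mul_sum, Finset.sum_mul]
  refine Finset.sum_congr rfl fun τ _ => ?_
  rw [hτ, Finset.prod_mul_distrib]
  ring

end EFG

/-- For every lower-bound function `η` there exists a distribution
`μ ∈ Δ_Π` such that following recommendations is an NE of the perturbed extended
game `(Γ^ext(μ), η)` (hence the trembling LP is always unbounded). -/
theorem exists_pert_ext_ne {n : ℕ} (G : EFG n) (η : G.Action → ℝ)
    (hη : G.IsLowerBound η) :
    ∃ μ : G.Profile → ℝ, G.IsDistribution μ ∧ G.ExtIsPertNE μ η (G.followRecPert η) := by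
  have : ∀ i, Nonempty (G.PureStrat i) := fun i =>
    ⟨fun J => ⟨_, (G.infActions_nonempty J.1).choose_spec⟩⟩
  obtain ⟨μ, hμ0, hμ1, hμ⟩ := exists_correlated_equilibrium (G.pertPayoff η)
  refine ⟨μ, ⟨hμ0, hμ1⟩, G.isExtBehavior_followRecPert hη, G.extRespects_followRecPert hη, ?_⟩
  intro i δi hbeh hresp
  have hsum : ∀ J r, ∑ a ∈ G.infActions J.1, δi J r a = 1 := fun J r => by
    simpa using (hbeh i J r).2.1
  have hlow : ∀ J r, ∀ a ∈ G.infActions J.1, η a ≤ δi J r a := fun J r a ha => by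
    simpa using hresp i J r a ha
  have hmass : ∀ s : G.PureStrat i,
      ∑ τ : G.PureStrat i, ∏ J, G.residualWeight η δi s J (τ J) = 1 := fun s => by
    rw [← Fintype.prod_sum]
    simp only [G.sum_residualWeight hη hsum, Finset.prod_const_one]
  have hce := hμ i (fun s τ => ∏ J, G.residualWeight η δi s J (τ J))
    fun s τ => Finset.prod_nonneg fun J _ => G.residualWeight_nonneg hη hlow s J (τ J)
  simp only [mul_sub, Finset.sum_sub_distrib, ← Finset.sum_mul, hmass, one_mul, sub_nonneg] at hce
  simp only [EFG.extEU, G.sum_extReachAux_update hη hsum]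
  exact hce
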